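/- Let G be a finite closed set of sequents (labels as above) and S ∈ G. Then there is an enumeration S_1, S_2, …, S_n of the elements of [S]_G with S_1 = S such that for every k with 2 ≤ k ≤ n, the sequent S_k shares a label across sides with the previously enumerated part: v_r(S_k) ∩ v_l({S_1,…,S_{k−1}}) ≠ ∅ or v_l(S_k) ∩ v_r({S_1,…,S_{k−1}}) ≠ ∅. -/

import Mathlib

/-- Greedy enumeration: if every proper subset of `K` containing `S` can be extended by a new
element of `K` related to it by `P`, then `K` can be enumerated starting at `S` so that each later
element is related by `P` to the set of its predecessors. -/
theorem Finset.exists_enumeration_of_exists_extension {α : Type*} [DecidableEq α] {K : Finset α}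
    {S : α} (hS : S ∈ K) (P : Finset α → α → Prop)
    (hP : ∀ H ⊂ K, S ∈ H → ∃ a ∈ K, a ∉ H ∧ P H a) :
    ∃ e : ℕ → α, e 0 = S ∧ (Finset.range K.card).image e = K ∧
      ∀ k < K.card, 0 < k → P ((Finset.range k).image e) (e k) := by
  have key : ∀ m, m + 1 ≤ K.card → ∃ e : ℕ → α, e 0 = S ∧
      (Finset.range (m + 1)).image e ⊆ K ∧ ((Finset.range (m + 1)).image e).card = m + 1 ∧
      ∀ k < m + 1, 0 < k → P ((Finset.range k).image e) (e k) := by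
    intro m
    induction m with
    | zero =>
      intro _
      refine ⟨fun _ => S, rfl, by simpa using hS, by simp, fun k hk hk0 => by omega⟩
    | succ m ih =>
      intro hm
      obtain ⟨e, he0, hsub, hcard, hlink⟩ := ih (by omega)
      have hss : (Finset.range (m + 1)).image e ⊂ K := by
        refine Finset.ssubset_iff_subset_ne.2 ⟨hsub, fun h => ?_⟩
        rw [h] at hcard
        omega
      obtain ⟨a, haK, haH, hPa⟩ :=
        hP _ hss (Finset.mem_image.2 ⟨0, Finset.mem_range.2 (by omega), he0⟩)
      have himg : ∀ k ≤ m + 1, (Finset.range k).image (Function.update e (m + 1) a) =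
          (Finset.range k).image e := by
        intro k hk
        refine Finset.image_congr fun i hi => Function.update_of_ne ?_ _ _
        have := Finset.mem_range.1 (Finset.mem_coe.1 hi)
        omega
      have himg' : (Finset.range (m + 1 + 1)).image (Function.update e (m + 1) a) =
          insert a ((Finset.range (m + 1)).image e) := by
        rw [Finset.range_add_one, Finset.image_insert, himg _ le_rfl, Function.update_self]
      refine ⟨Function.update e (m + 1) a, ?_, ?_, ?_, fun k hk hk0 => ?_⟩
      · rw [Function.update_of_ne (by omega), he0]
      · rw [himg']
        exact Finset.insert_subset haK hsub
      · rw [himg', Finset.card_insert_of_notMem haH, hcard]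
      · rw [himg k (by omega)]
        rcases Nat.lt_succ_iff_lt_or_eq.1 hk with h | rfl
        · rw [Function.update_of_ne (by omega)]
          exact hlink k h hk0
        · rwa [Function.update_self]
  obtain ⟨m, hm⟩ := Nat.exists_eq_succ_of_ne_zero (Finset.card_ne_zero_of_mem hS)
  obtain ⟨e, he0, hsub, hcard, hlink⟩ := key m hm.ge
  rw [hm]
  exact ⟨e, he0, Finset.eq_of_subset_of_card_le hsub (by rw [hcard, hm]), hlink⟩

/-- If no element of `K \ H` has a `g`-label among the `f`-labels of `H`, then the `f`-labels of `H`
are `g`-labels of `H`, provided they are `g`-labels of `K`. -/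
theorem Finset.biUnion_subset_biUnion_of_disjoint_sdiff {α β : Type*} [DecidableEq β]
    {f g : α → Finset β} {H K : Finset α} (hHK : H ⊆ K) (hK : K.biUnion f ⊆ K.biUnion g)
    (h : ∀ a ∈ K, a ∉ H → Disjoint (g a) (H.biUnion f)) : H.biUnion f ⊆ H.biUnion g := by
  intro x hx
  obtain ⟨b, hbK, hxb⟩ :=
    Finset.mem_biUnion.1 (hK (Finset.biUnion_subset_biUnion_of_subset_left f hHK hx))
  by_cases hbH : b ∈ H
  · exact Finset.mem_biUnion.2 ⟨b, hbH, hxb⟩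
  · exact absurd hx (Finset.disjoint_left.1 (h b hbK hbH) hxb)


/-- The minimal closed sub-hypersequent [S]_G can be enumerated starting at S
so that each later sequent shares an eigenvariable label across sides with
the previously enumerated part. -/
theorem stmt_6 {α : Type*} [DecidableEq α] (G : Finset α)
    (vl vr : α → Finset ℕ)
    (hl : ∀ a ∈ G, ∀ b ∈ G, a ≠ b → Disjoint (vl a) (vl b))
    (hr : ∀ a ∈ G, ∀ b ∈ G, a ≠ b → Disjoint (vr a) (vr b))
    (hG : G.biUnion vl = G.biUnion vr)
    (S : α) (hS : S ∈ G)
    (K : Finset α) (hKsub : K ⊆ G) (hSK : S ∈ K)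
    (hKc : K.biUnion vl = K.biUnion vr)
    (hKmin : ∀ H : Finset α, H ⊆ G → S ∈ H → H.biUnion vl = H.biUnion vr → K ⊆ H) :
    ∃ (n : ℕ) (e : Fin n → α),
      Function.Injective e ∧ (∀ i, e i ∈ K) ∧ (∀ a ∈ K, ∃ i, e i = a) ∧
      (∃ h0 : 0 < n, e ⟨0, h0⟩ = S) ∧
      ∀ k : Fin n, 0 < (k : ℕ) →
        ((vr (e k) ∩ (Finset.univ.filter (fun i : Fin n => i < k)).biUnion
            (fun i => vl (e i))).Nonempty ∨
         (vl (e k) ∩ (Finset.univ.filter (fun i : Fin n => i < k)).biUnion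
            (fun i => vr (e i))).Nonempty) := by
  obtain ⟨e, he0, himg, hlink⟩ := Finset.exists_enumeration_of_exists_extension hSK
    (fun H a => (vr a ∩ H.biUnion vl).Nonempty ∨ (vl a ∩ H.biUnion vr).Nonempty) (by
      intro H hHK hSH
      by_contra! hno
      have hclosed : H.biUnion vl = H.biUnion vr := Finset.Subset.antisymm
        (Finset.biUnion_subset_biUnion_of_disjoint_sdiff hHK.subset hKc.subset fun a haK haH =>
          Finset.disjoint_iff_inter_eq_empty.2 (hno a haK haH).1)
        (Finset.biUnion_subset_biUnion_of_disjoint_sdiff hHK.subset hKc.superset fun a haK haH =>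
          Finset.disjoint_iff_inter_eq_empty.2 (hno a haK haH).2)
      exact hHK.not_subset (hKmin H (hHK.subset.trans hKsub) hSH hclosed))
  have hinj : Set.InjOn e (Finset.range K.card) :=
    Finset.card_image_iff.1 (by rw [himg, Finset.card_range])
  have hpre : ∀ (v : α → Finset ℕ) (k : Fin K.card),
      (Finset.univ.filter (fun i : Fin K.card => i < k)).biUnion (fun i => v (e i)) =
        ((Finset.range k).image e).biUnion v := by
    intro v k
    ext x
    simp only [Finset.mem_biUnion, Finset.mem_filter, Finset.mem_univ, true_and,
      Finset.mem_image, Finset.mem_range, exists_exists_and_eq_and]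
    exact ⟨fun ⟨i, hi, hx⟩ => ⟨i, hi, hx⟩, fun ⟨i, hi, hx⟩ => ⟨⟨i, hi.trans k.2⟩, hi, hx⟩⟩
  refine ⟨K.card, fun i => e i, fun i j hij => ?_, fun i => ?_, fun a ha => ?_,
    ⟨Finset.card_pos.2 ⟨S, hSK⟩, he0⟩, fun k hk => ?_⟩
  · exact Fin.ext (hinj (by simp) (by simp) hij)
  · exact himg.subset (Finset.mem_image_of_mem e (Finset.mem_range.2 i.2))
  · obtain ⟨i, hi, rfl⟩ := Finset.mem_image.1 (himg.superset ha)
    exact ⟨⟨i, Finset.mem_range.1 hi⟩, rfl⟩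
  · rw [hpre vl k, hpre vr k]
    exact hlink k k.2 hk
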